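/- Let c be continuous and let π be a weak cluster point of the family (π_ε) as ε → 0. Then the support of π is c-cyclically monotone; consequently, π is an optimal transport whenever the optimal transport problem inf_{π'∈Π(μ,ν)} ∫ c dπ' is finite. If moreover Π(μ,ν) contains a unique coupling π_* with c-cyclically monotone support, then π_ε converges weakly to π_* as ε → 0. -/

import Mathlib

open MeasureTheory Filter Topology Set
open scoped ENNReal

noncomputable section

namespace EOT

variable {X Y : Type*}

/-- A coupling of `μ` and `ν`: a probability measure on the product with the given marginals. -/
def IsCoupling [MeasurableSpace X] [MeasurableSpace Y]
    (μ : Measure X) (ν : Measure Y) (π : Measure (X × Y)) : Prop :=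
  IsProbabilityMeasure π ∧ π.map Prod.fst = μ ∧ π.map Prod.snd = ν

/-- `(c,ε)`-cyclical invariance: `π` is equivalent to `P = μ ⊗ ν`, with a positive version of the
density satisfying the cyclical identity for all `k` points. -/
def IsCyclInvariant [MeasurableSpace X] [MeasurableSpace Y]
    (c : X → Y → ℝ) (ε : ℝ) (μ : Measure X) (ν : Measure Y)
    (π : Measure (X × Y)) : Prop :=
  IsCoupling μ ν π ∧
  ∃ D : X × Y → ℝ, Measurable D ∧ (∀ z, 0 < D z) ∧
    π = (μ.prod ν).withDensity (fun z => ENNReal.ofReal (D z)) ∧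
    ∀ (k : ℕ) (x : Fin (k + 1) → X) (y : Fin (k + 1) → Y),
      (∏ i, D (x i, y i)) =
        Real.exp (-(1 / ε) * ((∑ i, c (x i) (y i)) - ∑ i, c (x i) (y (i + 1)))) *
        ∏ i, D (x i, y (i + 1))

/-- Topological support of a measure. -/
def mSupport {Z : Type*} [TopologicalSpace Z] [MeasurableSpace Z] (π : Measure Z) : Set Z :=
  {z | ∀ U : Set Z, IsOpen U → z ∈ U → 0 < π U}

/-- Weak convergence `π ε → π₀` as `ε → 0⁺`, tested against bounded continuous functions. -/
def TendstoWeakly {Z : Type*} [TopologicalSpace Z] [MeasurableSpace Z]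
    (π : ℝ → Measure Z) (π₀ : Measure Z) : Prop :=
  ∀ f : BoundedContinuousFunction Z ℝ,
    Tendsto (fun ε => ∫ z, f z ∂(π ε)) (𝓝[>] (0 : ℝ)) (𝓝 (∫ z, f z ∂π₀))

/-- `c`-cyclical monotonicity of a set `Γ ⊆ X × Y`. -/
def CCyclMonotone (c : X → Y → ℝ) (Γ : Set (X × Y)) : Prop :=
  ∀ (k : ℕ) (p : Fin (k + 1) → X × Y), (∀ i, p i ∈ Γ) →
    (∑ i, c (p i).1 (p i).2) ≤ ∑ i, c (p i).1 (p (i + 1)).2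

/-- The rate function `I(x,y)`: supremum over `k ≥ 2`, points `(x_i,y_i)_{i=2}^k ⊆ Γ`
(the first point being `z`) and permutations `σ` of the cost difference. -/
def rateI (c : X → Y → ℝ) (Γ : Set (X × Y)) (z : X × Y) : EReal :=
  ⨆ (k : ℕ) (p : Fin (k + 2) → X × Y) (_ : p 0 = z) (_ : ∀ i, i ≠ 0 → p i ∈ Γ)
    (σ : Equiv.Perm (Fin (k + 2))),
    (((∑ i, c (p i).1 (p i).2) - ∑ i, c (p i).1 (p (σ i)).2 : ℝ) : EReal)

/-- The variant of the rate function using only the cyclic shift. -/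
def rateICyc (c : X → Y → ℝ) (Γ : Set (X × Y)) (z : X × Y) : EReal :=
  ⨆ (k : ℕ) (p : Fin (k + 2) → X × Y) (_ : p 0 = z) (_ : ∀ i, i ≠ 0 → p i ∈ Γ),
    (((∑ i, c (p i).1 (p i).2) - ∑ i, c (p i).1 (p (i + 1)).2 : ℝ) : EReal)

open scoped Classical in
/-- Relative entropy (Kullback–Leibler divergence) `H(π|R)`, valued in `EReal`. -/
def relEntropy {Z : Type*} [MeasurableSpace Z] (π R : Measure Z) : EReal :=
  if π ≪ R ∧ Integrable (fun z => Real.log (π.rnDeriv R z).toReal) π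
  then ((∫ z, Real.log (π.rnDeriv R z).toReal ∂π : ℝ) : EReal)
  else ⊤

/-- Transport cost `∫ c dπ` (as a lower integral). -/
def transportCost [MeasurableSpace X] [MeasurableSpace Y]
    (c : X → Y → ℝ) (π : Measure (X × Y)) : ℝ≥0∞ :=
  ∫⁻ z, ENNReal.ofReal (c z.1 z.2) ∂π

/-- Entropic optimal transport objective `∫ c dπ + ε H(π|μ⊗ν)`. -/
def eotObj [MeasurableSpace X] [MeasurableSpace Y]
    (c : X → Y → ℝ) (ε : ℝ) (μ : Measure X) (ν : Measure Y) (π : Measure (X × Y)) : EReal :=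
  (transportCost c π : EReal) + (ε : EReal) * relEntropy π (μ.prod ν)

/-- The `c`-conjugate `ψ^c(y) = inf_x [ψ(x) + c(x,y)]`. -/
def cConj (c : X → Y → ℝ) (ψ : X → EReal) (y : Y) : EReal :=
  ⨅ x, ψ x + (c x y : EReal)

/-- A proper `c`-convex function `ψ(x) = sup_y [ζ(y) − c(x,y)]`. -/
def IsCConvex (c : X → Y → ℝ) (ψ : X → EReal) : Prop :=
  (∀ x, ψ x ≠ ⊥) ∧ (∃ x, ψ x ≠ ⊤) ∧
  ∃ ζ : Y → EReal, ∀ x, ψ x = ⨆ y, ζ y - (c x y : EReal)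

/-- The `c`-subdifferential `∂_c ψ = {(x,y) : ψ^c(y) − ψ(x) = c(x,y)}`. -/
def cSubdiff (c : X → Y → ℝ) (ψ : X → EReal) : Set (X × Y) :=
  {p | cConj c ψ p.2 - ψ p.1 = (c p.1 p.2 : EReal)}

/-- A Kantorovich potential for `Γ`: a `c`-convex `ψ` with `Γ ⊆ ∂_c ψ`. -/
def IsKantorovichPotential (c : X → Y → ℝ) (Γ : Set (X × Y)) (ψ : X → EReal) : Prop :=
  IsCConvex c ψ ∧ Γ ⊆ cSubdiff c ψ

/-- Uniqueness of Kantorovich potentials on a set `Λ ⊆ X`. -/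
def UniquenessOfPotentials (c : X → Y → ℝ) (Γ : Set (X × Y)) (Λ : Set X) : Prop :=
  ∀ ψ₁ ψ₂ : X → EReal, IsKantorovichPotential c Γ ψ₁ → IsKantorovichPotential c Γ ψ₂ →
    ∀ x ∈ Λ, ∀ x' ∈ Λ, ψ₁ x - ψ₂ x = ψ₁ x' - ψ₂ x'

/-- The Rockafellar antiderivative `ψ_{(x₀,y₀)}` of `Γ`. -/
def rockafellar (c : X → Y → ℝ) (Γ : Set (X × Y)) (z₀ : X × Y) (x : X) : EReal :=
  ⨆ (k : ℕ) (p : Fin (k + 1) → X × Y) (_ : ∀ i, p i ∈ Γ),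
    ((c z₀.1 z₀.2 - c (p 0).1 z₀.2 +
        ∑ i : Fin (k + 1),
          (c (p i).1 (p i).2 -
            c (if h : (i : ℕ) + 1 < k + 1 then (p ⟨(i : ℕ) + 1, h⟩).1 else x) (p i).2) : ℝ) : EReal)

section Statement

variable {X Y : Type*}
  [MeasurableSpace X] [MetricSpace X] [PolishSpace X] [BorelSpace X]
  [MeasurableSpace Y] [MetricSpace Y] [PolishSpace Y] [BorelSpace Y]

/-!
Along closed paths of `k` points whose cost would drop by at least `δ` under the cyclic
reassignment of targets, cyclical invariance bounds the density of the `k`-fold product of `π_ε` by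
`exp (-δ / ε)` times its cyclic shift. The shift preserves `(μ ⊗ ν)^k`, so the set of these paths
has mass at most `exp (-δ / ε)`. Weak convergence passes to products, hence the limit of the
products does not charge the open set of paths with gap above `δ`, which therefore misses
`(supp π)^k`.

A coupling concentrated on a cyclically monotone set is optimal because the Rockafellar
antiderivative of the set is a dual potential; truncation and Fatou's lemma replace its
integrability. Finally, the couplings of `μ` and `ν` form a weakly compact set in which every
cluster point of `π_ε` has cyclically monotone support, so uniqueness of such a coupling forces
convergence.
-/

section Support

variable {Z : Type*} [TopologicalSpace Z] [MeasurableSpace Z]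

lemma mSupport_eq_support (π : Measure Z) : mSupport π = π.support := by
  rw [Measure.support_eq_forall_isOpen]
  exact Set.ext fun _ => forall_congr' fun _ => forall_comm

lemma ae_mem_mSupport [HereditarilyLindelofSpace Z] (π : Measure Z) :
    ∀ᵐ z ∂π, z ∈ mSupport π :=
  mSupport_eq_support π ▸ Measure.support_mem_ae

lemma mem_mSupport_pi {ι : Type*} [Fintype ι] {π : Measure Z} [SigmaFinite π]
    {p : ι → Z} (hp : ∀ i, p i ∈ mSupport π) : p ∈ mSupport (Measure.pi fun _ : ι => π) := by
  intro U hU hpU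
  obtain ⟨B, hB, hBU⟩ := isOpen_pi_iff'.1 hU p hpU
  calc 0 < ∏ i, π (B i) :=
        CanonicallyOrderedAdd.prod_pos.2 fun i _ => hp i (B i) (hB i).1 (hB i).2
    _ = Measure.pi (fun _ => π) (univ.pi B) := (Measure.pi_pi _ _).symm
    _ ≤ Measure.pi (fun _ => π) U := measure_mono hBU

end Support

section Products

lemma lintegral_pi_prod_eq_prod_lintegral {ι : Type*} [Fintype ι] {Ω : ι → Type*}
    [∀ i, MeasurableSpace (Ω i)] (μ : ∀ i, Measure (Ω i)) [∀ i, IsProbabilityMeasure (μ i)]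
    {g : ∀ i, Ω i → ℝ≥0∞} (hg : ∀ i, Measurable (g i)) :
    ∫⁻ w, ∏ i, g i (w i) ∂Measure.pi μ = ∏ i, ∫⁻ z, g i z ∂μ i := by
  have hind := ProbabilityTheory.iIndepFun_pi (μ := μ) (X := g) fun i => (hg i).aemeasurable
  rw [ProbabilityTheory.lintegral_prod_eq_prod_lintegral_of_indepFun Finset.univ _ hind
    fun i => (hg i).comp (measurable_pi_apply i)]
  exact Finset.prod_congr rfl fun i _ => (measurePreserving_eval μ i).lintegral_comp (hg i)

lemma pi_withDensity {ι : Type*} [Fintype ι] {Ω : ι → Type*}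
    [∀ i, MeasurableSpace (Ω i)] (μ : ∀ i, Measure (Ω i)) [∀ i, IsProbabilityMeasure (μ i)]
    {d : ∀ i, Ω i → ℝ≥0∞} (hd : ∀ i, Measurable (d i))
    [∀ i, SigmaFinite ((μ i).withDensity (d i))] :
    Measure.pi (fun i => (μ i).withDensity (d i)) =
      (Measure.pi μ).withDensity fun w => ∏ i, d i (w i) := by
  refine Measure.pi_eq fun s hs => ?_
  have hbox : (univ.pi s).indicator (fun w => ∏ i, d i (w i)) =
      fun w => ∏ i, (s i).indicator (d i) (w i) := by
    ext w
    by_cases hw : w ∈ univ.pi s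
    · rw [indicator_of_mem hw]
      exact Finset.prod_congr rfl fun i _ => (indicator_of_mem (hw i trivial) _).symm
    · obtain ⟨i, hi⟩ : ∃ i, w i ∉ s i := by simpa using hw
      rw [indicator_of_notMem hw]
      exact (Finset.prod_eq_zero (Finset.mem_univ i) (indicator_of_notMem hi _)).symm
  calc (Measure.pi μ).withDensity (fun w => ∏ i, d i (w i)) (univ.pi s)
      = ∫⁻ w, ∏ i, (s i).indicator (d i) (w i) ∂Measure.pi μ := by
        rw [withDensity_apply _ (.univ_pi hs), ← lintegral_indicator (.univ_pi hs), hbox]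
    _ = ∏ i, ∫⁻ z, (s i).indicator (d i) z ∂μ i :=
        lintegral_pi_prod_eq_prod_lintegral μ fun i => (hd i).indicator (hs i)
    _ = ∏ i, (μ i).withDensity (d i) (s i) :=
        Finset.prod_congr rfl fun i _ => by
          rw [withDensity_apply _ (hs i), lintegral_indicator (hs i)]

lemma measurePreserving_pi_prod_permute_snd {ι X Y : Type*} [Fintype ι] [MeasurableSpace X]
    [MeasurableSpace Y] (μ : Measure X) (ν : Measure Y) [SigmaFinite μ] [SigmaFinite ν]
    (σ : Equiv.Perm ι) :
    MeasurePreserving (fun (w : ι → X × Y) i => ((w i).1, (w (σ i)).2))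
      (Measure.pi fun _ => μ.prod ν) (Measure.pi fun _ => μ.prod ν) := by
  have hsplit := measurePreserving_arrowProdEquivProdArrow X Y ι (fun _ => μ) (fun _ => ν)
  have hpermute : MeasurePreserving (fun (y : ι → Y) i => y (σ i))
      (Measure.pi fun _ => ν) (Measure.pi fun _ => ν) := by
    convert measurePreserving_piCongrLeft (α := fun _ : ι => Y) (fun _ => ν) σ.symm using 1
    ext y i
    simpa using (MeasurableEquiv.piCongrLeft_apply_apply σ.symm (β := fun _ => Y) y (σ i)).symm
  exact (hsplit.symm.comp ((MeasurePreserving.id _).prod hpermute)).comp hsplit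

end Products

section WeakConvergence

lemma isClosed_setOf_coe_eq {Z : Type*} [TopologicalSpace Z] [MeasurableSpace Z] [BorelSpace Z]
    [HasOuterApproxClosed Z] (κ : Measure Z) :
    IsClosed {m : ProbabilityMeasure Z | (m : Measure Z) = κ} :=
  Set.Subsingleton.isClosed fun _ hm _ hm' => Subtype.ext (hm.trans hm'.symm)

variable {Z : Type*} [TopologicalSpace Z] [MeasurableSpace Z] [OpensMeasurableSpace Z]
  [HasOuterApproxClosed Z]

lemma lowerSemicontinuous_measure_of_isOpen {U : Set Z} (hU : IsOpen U) :
    LowerSemicontinuous fun m : ProbabilityMeasure Z => (m : Measure Z) U := fun _ _ hr =>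
  eventually_lt_of_lt_liminf <|
    hr.trans_le (ProbabilityMeasure.le_liminf_measure_open_of_tendsto tendsto_id hU)

lemma measure_eq_zero_of_mapClusterPt {ι : Type*} {l : Filter ι} {P : ι → ProbabilityMeasure Z}
    {m : ProbabilityMeasure Z} (hm : MapClusterPt m l P) {U : Set Z} (hU : IsOpen U)
    {r : ι → ℝ≥0∞} (hr : Tendsto r l (𝓝 0)) (hP : ∀ᶠ i in l, (P i : Measure Z) U ≤ r i) :
    (m : Measure Z) U = 0 := by
  by_contra hne
  obtain ⟨s, hs0, hs⟩ := exists_between (pos_iff_ne_zero.2 hne)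
  have hfreq : ∃ᶠ i in l, s < (P i : Measure Z) U :=
    hm.frequently (lowerSemicontinuous_measure_of_isOpen hU m s hs)
  obtain ⟨i, hsi, hPi, hri⟩ := (hfreq.and_eventually (hP.and (hr.eventually_lt_const hs0))).exists
  exact (hsi.trans_le hPi).not_gt hri

end WeakConvergence

section Couplings

variable {X Y : Type*} [MeasurableSpace X] [MeasurableSpace Y]
  {μ : Measure X} {ν : Measure Y} {π π' : Measure (X × Y)}

namespace IsCoupling

lemma measurePreserving_fst (h : IsCoupling μ ν π) : MeasurePreserving Prod.fst π μ :=
  ⟨measurable_fst, h.2.1⟩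

lemma measurePreserving_snd (h : IsCoupling μ ν π) : MeasurePreserving Prod.snd π ν :=
  ⟨measurable_snd, h.2.2⟩

lemma isProbabilityMeasure_left (h : IsCoupling μ ν π) : IsProbabilityMeasure μ :=
  have := h.1
  h.2.1 ▸ Measure.isProbabilityMeasure_map measurable_fst.aemeasurable

lemma isProbabilityMeasure_right (h : IsCoupling μ ν π) : IsProbabilityMeasure ν :=
  have := h.1
  h.2.2 ▸ Measure.isProbabilityMeasure_map measurable_snd.aemeasurable

lemma ae_fst_iff (h : IsCoupling μ ν π) {p : X → Prop} (hp : MeasurableSet {x | p x}) :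
    (∀ᵐ z ∂π, p z.1) ↔ ∀ᵐ x ∂μ, p x := by
  rw [← h.2.1, ae_map_iff measurable_fst.aemeasurable hp]

lemma ae_snd_iff (h : IsCoupling μ ν π) {p : Y → Prop} (hp : MeasurableSet {y | p y}) :
    (∀ᵐ z ∂π, p z.2) ↔ ∀ᵐ y ∂ν, p y := by
  rw [← h.2.2, ae_map_iff measurable_snd.aemeasurable hp]

lemma integrable_sub (h : IsCoupling μ ν π) {f : X → ℝ} {g : Y → ℝ} (hf : Integrable f μ)
    (hg : Integrable g ν) : Integrable (fun z => g z.2 - f z.1) π :=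
  (h.measurePreserving_snd.integrable_comp_of_integrable hg).sub
    (h.measurePreserving_fst.integrable_comp_of_integrable hf)

lemma integral_sub (h : IsCoupling μ ν π) {f : X → ℝ} {g : Y → ℝ} (hf : Integrable f μ)
    (hg : Integrable g ν) : ∫ z, (g z.2 - f z.1) ∂π = ∫ y, g y ∂ν - ∫ x, f x ∂μ := by
  have hf' : Integrable (fun z => f z.1) π :=
    h.measurePreserving_fst.integrable_comp_of_integrable hf
  have hg' : Integrable (fun z => g z.2) π :=
    h.measurePreserving_snd.integrable_comp_of_integrable hg
  rw [MeasureTheory.integral_sub hg' hf']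
  congr 1
  · rw [← h.2.2] at hg ⊢
    exact (integral_map measurable_snd.aemeasurable hg.aestronglyMeasurable).symm
  · rw [← h.2.1] at hf ⊢
    exact (integral_map measurable_fst.aemeasurable hf.aestronglyMeasurable).symm

end IsCoupling

lemma isClosed_setOf_isCoupling [TopologicalSpace X] [HasOuterApproxClosed X] [BorelSpace X]
    [TopologicalSpace Y] [HasOuterApproxClosed Y] [BorelSpace Y] [OpensMeasurableSpace (X × Y)]
    (μ : Measure X) (ν : Measure Y) :
    IsClosed {m : ProbabilityMeasure (X × Y) | IsCoupling μ ν (m : Measure (X × Y))} := by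
  have hfst : IsClosed {m : ProbabilityMeasure (X × Y) | (m : Measure (X × Y)).map Prod.fst = μ} :=
    (isClosed_setOf_coe_eq μ).preimage (ProbabilityMeasure.continuous_map continuous_fst)
  have hsnd : IsClosed {m : ProbabilityMeasure (X × Y) | (m : Measure (X × Y)).map Prod.snd = ν} :=
    (isClosed_setOf_coe_eq ν).preimage (ProbabilityMeasure.continuous_map continuous_snd)
  convert hfst.inter hsnd using 1
  ext m
  exact and_iff_right m.2

lemma isCompact_setOf_isCoupling [TopologicalSpace X] [PolishSpace X] [BorelSpace X]
    [TopologicalSpace Y] [PolishSpace Y] [BorelSpace Y] (μ : Measure X) (ν : Measure Y)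
    [IsFiniteMeasure μ] [IsFiniteMeasure ν] :
    IsCompact {m : ProbabilityMeasure (X × Y) | IsCoupling μ ν (m : Measure (X × Y))} := by
  rw [← (isClosed_setOf_isCoupling μ ν).closure_eq]
  refine isCompact_closure_of_isTightMeasureSet (IsTightMeasureSet.prodMk ?_ ?_)
  · refine (isTightMeasureSet_singleton (μ := μ)).subset ?_
    rintro _ ⟨_, ⟨m, hm, rfl⟩, rfl⟩
    exact hm.2.1
  · refine (isTightMeasureSet_singleton (μ := ν)).subset ?_
    rintro _ ⟨_, ⟨m, hm, rfl⟩, rfl⟩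
    exact hm.2.2

end Couplings

section CyclicInvariance

variable {X Y : Type*}

/-- The cost saved on the closed path `w` when each source is reassigned to the target of the next
point; `Γ` is `c`-cyclically monotone when no closed path in `Γ` has a positive gap. -/
def cyclicGap (c : X → Y → ℝ) {k : ℕ} (w : Fin (k + 1) → X × Y) : ℝ :=
  (∑ i, c (w i).1 (w i).2) - ∑ i, c (w i).1 (w (i + 1)).2

lemma continuous_cyclicGap [TopologicalSpace X] [TopologicalSpace Y] {c : X → Y → ℝ}
    (hc : Continuous fun z : X × Y => c z.1 z.2) (k : ℕ) :
    Continuous (cyclicGap c : (Fin (k + 1) → X × Y) → ℝ) := by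
  refine (continuous_finsetSum _ fun i _ => ?_).sub (continuous_finsetSum _ fun i _ => ?_)
  · exact hc.comp (continuous_apply i)
  · have hshift : Continuous fun w : Fin (k + 1) → X × Y => ((w i).1, (w (i + 1)).2) := by fun_prop
    exact hc.comp hshift

lemma prod_ofReal_le_of_le_cyclicGap {c : X → Y → ℝ} {ε δ : ℝ} (hε : 0 < ε) {D : X × Y → ℝ}
    (hD : ∀ z, 0 < D z) {k : ℕ} {w : Fin (k + 1) → X × Y} (hw : δ ≤ cyclicGap c w)
    (hcyc : ∏ i, D (w i) =
      Real.exp (-(1 / ε) * cyclicGap c w) * ∏ i, D ((w i).1, (w (i + 1)).2)) :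
    ∏ i, ENNReal.ofReal (D (w i)) ≤ ENNReal.ofReal (Real.exp (-(δ / ε))) *
      ∏ i, ENNReal.ofReal (D ((w i).1, (w (i + 1)).2)) := by
  rw [← ENNReal.ofReal_prod_of_nonneg fun i _ => (hD _).le,
    ← ENNReal.ofReal_prod_of_nonneg fun i _ => (hD _).le,
    ← ENNReal.ofReal_mul (Real.exp_pos _).le, hcyc]
  have hexp : -(1 / ε) * cyclicGap c w ≤ -(δ / ε) := by
    rw [neg_mul, one_div_mul_eq_div]
    gcongr
  exact ENNReal.ofReal_le_ofReal <|
    mul_le_mul_of_nonneg_right (Real.exp_le_exp.2 hexp) (Finset.prod_nonneg fun i _ => (hD _).le)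

variable [MeasurableSpace X] [MeasurableSpace Y]

lemma IsCyclInvariant.pi_cyclicGap_le {c : X → Y → ℝ} {ε : ℝ} {μ : Measure X} {ν : Measure Y}
    {π : Measure (X × Y)} (h : IsCyclInvariant c ε μ ν π) (hε : 0 < ε) (k : ℕ) (δ : ℝ) :
    Measure.pi (fun _ : Fin (k + 1) => π) {w | δ ≤ cyclicGap c w} ≤
      ENNReal.ofReal (Real.exp (-(δ / ε))) := by
  have := h.1.1
  have := h.1.isProbabilityMeasure_left
  have := h.1.isProbabilityMeasure_right
  obtain ⟨-, D, hD, hD0, rfl, hcyc⟩ := h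
  set ρ : Measure (Fin (k + 1) → X × Y) := Measure.pi fun _ => μ.prod ν
  set d : X × Y → ℝ≥0∞ := fun z => ENNReal.ofReal (D z)
  set shift : (Fin (k + 1) → X × Y) → Fin (k + 1) → X × Y := fun w i => ((w i).1, (w (i + 1)).2)
  have hd : Measurable d := hD.ennreal_ofReal
  have hprod : Measurable fun w : Fin (k + 1) → X × Y => ∏ i, d (w i) := by fun_prop
  have hshift : MeasurePreserving shift ρ ρ :=
    measurePreserving_pi_prod_permute_snd μ ν (Equiv.addRight 1)
  have hshift_meas : Measurable fun w : Fin (k + 1) → X × Y => ∏ i, d (shift w i) :=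
    hprod.comp hshift.measurable
  have hmass : ∫⁻ w, ∏ i, d (w i) ∂ρ = 1 := by
    rw [← setLIntegral_univ, ← withDensity_apply _ .univ, ← pi_withDensity _ fun _ => hd]
    exact measure_univ
  calc Measure.pi (fun _ => (μ.prod ν).withDensity d) {w | δ ≤ cyclicGap c w}
      = ∫⁻ w in {w | δ ≤ cyclicGap c w}, ∏ i, d (w i) ∂ρ := by
        rw [pi_withDensity _ fun _ => hd, withDensity_apply']
    _ ≤ ∫⁻ w in {w | δ ≤ cyclicGap c w},
          ENNReal.ofReal (Real.exp (-(δ / ε))) * ∏ i, d (shift w i) ∂ρ :=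
        setLIntegral_mono (hshift_meas.const_mul _) fun w hw =>
          prod_ofReal_le_of_le_cyclicGap hε hD0 hw (hcyc k (fun i => (w i).1) fun i => (w i).2)
    _ ≤ ∫⁻ w, ENNReal.ofReal (Real.exp (-(δ / ε))) * ∏ i, d (shift w i) ∂ρ :=
        setLIntegral_le_lintegral _ _
    _ = ENNReal.ofReal (Real.exp (-(δ / ε))) := by
        rw [lintegral_const_mul _ hshift_meas, hshift.lintegral_comp hprod,
          hmass, mul_one]

end CyclicInvariance

section ClusterPoints

variable {X Y : Type*} [MeasurableSpace X] [MeasurableSpace Y]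
  [TopologicalSpace X] [TopologicalSpace.PseudoMetrizableSpace X] [SecondCountableTopology X]
  [OpensMeasurableSpace X]
  [TopologicalSpace Y] [TopologicalSpace.PseudoMetrizableSpace Y] [SecondCountableTopology Y]
  [OpensMeasurableSpace Y]

lemma tendsto_ofReal_exp_neg_div {δ : ℝ} (hδ : 0 < δ) :
    Tendsto (fun ε => ENNReal.ofReal (Real.exp (-(δ / ε)))) (𝓝[>] 0) (𝓝 0) := by
  rw [← ENNReal.ofReal_zero]
  exact ENNReal.tendsto_ofReal <| Real.tendsto_exp_neg_atTop_nhds_zero.comp <|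
    tendsto_inv_nhdsGT_zero.const_mul_atTop hδ

theorem cCyclMonotone_mSupport_of_mapClusterPt {ι : Type*} {l : Filter ι} {ε : ι → ℝ}
    (hε : Tendsto ε l (𝓝[>] 0)) {c : X → Y → ℝ} (hc : Continuous fun z : X × Y => c z.1 z.2)
    {μ : Measure X} {ν : Measure Y} {P : ι → ProbabilityMeasure (X × Y)}
    (hP : ∀ᶠ i in l, IsCyclInvariant c (ε i) μ ν (P i)) {m : ProbabilityMeasure (X × Y)}
    (hm : MapClusterPt m l P) : CCyclMonotone c (mSupport (m : Measure (X × Y))) := by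
  intro k p hp
  by_contra! hlt
  obtain ⟨δ, hδ, hδp⟩ : ∃ δ, 0 < δ ∧ δ < cyclicGap c p := exists_between (sub_pos.2 hlt)
  have hopen : IsOpen {w : Fin (k + 1) → X × Y | δ < cyclicGap c w} :=
    isOpen_Ioi.preimage (continuous_cyclicGap hc k)
  have hcont : Continuous fun m : ProbabilityMeasure (X × Y) =>
      ProbabilityMeasure.pi fun _ : Fin (k + 1) => m :=
    ProbabilityMeasure.continuous_pi.comp (continuous_pi fun _ => continuous_id)
  have hpi := hm.continuousAt_comp hcont.continuousAt
  have hbound : ∀ᶠ i in l, Measure.pi (fun _ : Fin (k + 1) => (P i : Measure (X × Y)))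
      {w | δ < cyclicGap c w} ≤ ENNReal.ofReal (Real.exp (-(δ / ε i))) := by
    filter_upwards [hP, hε.eventually self_mem_nhdsWithin] with i hi hεi
    refine le_trans (measure_mono ?_) (hi.pi_cyclicGap_le hεi k δ)
    exact fun w (hw : δ < cyclicGap c w) => hw.le
  have hnull := measure_eq_zero_of_mapClusterPt hpi hopen
    ((tendsto_ofReal_exp_neg_div hδ).comp hε) hbound
  exact (mem_mSupport_pi hp _ hopen hδp).ne' hnull

theorem tendsto_of_unique_cCyclMonotone {X Y : Type*} [MeasurableSpace X] [TopologicalSpace X]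
    [PolishSpace X] [BorelSpace X] [MeasurableSpace Y] [TopologicalSpace Y] [PolishSpace Y]
    [BorelSpace Y] {ι : Type*} {l : Filter ι} {ε : ι → ℝ} (hε : Tendsto ε l (𝓝[>] 0))
    {c : X → Y → ℝ} (hc : Continuous fun z : X × Y => c z.1 z.2) {μ : Measure X} {ν : Measure Y}
    [IsFiniteMeasure μ] [IsFiniteMeasure ν] {P : ι → ProbabilityMeasure (X × Y)}
    (hP : ∀ᶠ i in l, IsCyclInvariant c (ε i) μ ν (P i)) {m : ProbabilityMeasure (X × Y)}
    (hm : ∀ m' : ProbabilityMeasure (X × Y), IsCoupling μ ν (m' : Measure (X × Y)) →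
      CCyclMonotone c (mSupport (m' : Measure (X × Y))) → m' = m) : Tendsto P l (𝓝 m) :=
  (isCompact_setOf_isCoupling μ ν).tendsto_nhds_of_unique_mapClusterPt (hP.mono fun _ h => h.1)
    fun m' hm' hclust => hm m' hm' (cCyclMonotone_mSupport_of_mapClusterPt hε hc hP hclust)

end ClusterPoints

section Rockafellar

variable {X Y : Type*} {c : X → Y → ℝ} {Γ : Set (X × Y)}

/-- The cost saved along the open chain `q` when the target of each point is moved to the source of
the next one, the last target being moved to `x`. Its supremum over chains in `Γ` issued from `z₀`
is the Rockafellar antiderivative. -/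
def chainGain (c : X → Y → ℝ) {k : ℕ} (q : Fin (k + 1) → X × Y) (x : X) : ℝ :=
  (∑ i : Fin k, (c (q i.castSucc).1 (q i.castSucc).2 - c (q i.succ).1 (q i.castSucc).2)) +
    (c (q (Fin.last k)).1 (q (Fin.last k)).2 - c x (q (Fin.last k)).2)

lemma chainGain_cons {k : ℕ} (z : X × Y) (q : Fin (k + 1) → X × Y) (x : X) :
    chainGain c (Fin.cons z q : Fin (k + 2) → X × Y) x =
      (c z.1 z.2 - c (q 0).1 z.2) + chainGain c q x := by
  simp only [chainGain, Fin.sum_univ_succ (n := k), ← Fin.succ_last, Fin.castSucc_zero,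
    Fin.castSucc_succ, Fin.cons_zero, Fin.cons_succ]
  ring

lemma chainGain_snoc {k : ℕ} (q : Fin (k + 1) → X × Y) (z : X × Y) (x : X) :
    chainGain c (Fin.snoc q z : Fin (k + 2) → X × Y) x =
      chainGain c q z.1 + (c z.1 z.2 - c x z.2) := by
  simp only [chainGain, Fin.sum_univ_castSucc, Fin.succ_castSucc, Fin.succ_last, Fin.snoc_castSucc,
    Fin.snoc_last]

lemma chainGain_apply_zero {k : ℕ} (q : Fin (k + 1) → X × Y) :
    chainGain c q (q 0).1 = (∑ i, c (q i).1 (q i).2) - ∑ i, c (q (i + 1)).1 (q i).2 := by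
  simp only [chainGain, Fin.sum_univ_castSucc, Fin.coeSucc_eq_succ, Fin.last_add_one,
    Finset.sum_sub_distrib]
  ring

lemma CCyclMonotone.sum_le_sum_shift_fst (hΓ : CCyclMonotone c Γ) {k : ℕ}
    {q : Fin (k + 1) → X × Y} (hq : ∀ i, q i ∈ Γ) :
    ∑ i, c (q i).1 (q i).2 ≤ ∑ i, c (q (i + 1)).1 (q i).2 :=
  calc ∑ i, c (q i).1 (q i).2
      = ∑ i, c (q (-i)).1 (q (-i)).2 :=
        (Equiv.sum_comp (Equiv.neg _) fun i => c (q i).1 (q i).2).symm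
    _ ≤ ∑ i, c (q (-i)).1 (q (-(i + 1))).2 := hΓ k (fun i => q (-i)) fun i => hq (-i)
    _ = ∑ i, c (q (i + 1)).1 (q i).2 := by
        rw [← ((Equiv.addRight 1).trans (Equiv.neg _)).sum_comp]
        simp

lemma CCyclMonotone.chainGain_nonpos (hΓ : CCyclMonotone c Γ) {k : ℕ} {q : Fin (k + 1) → X × Y}
    (hq : ∀ i, q i ∈ Γ) : chainGain c q (q 0).1 ≤ 0 :=
  (chainGain_apply_zero q).trans_le (sub_nonpos.2 (hΓ.sum_le_sum_shift_fst hq))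

lemma rockafellar_eq_iSup_chainGain (z₀ : X × Y) (x : X) :
    rockafellar c Γ z₀ x = ⨆ (k : ℕ) (p : Fin (k + 1) → X × Y) (_ : ∀ i, p i ∈ Γ),
      (chainGain c (Fin.cons z₀ p : Fin (k + 2) → X × Y) x : EReal) := by
  refine iSup_congr fun k => iSup_congr fun p => iSup_congr fun _ => congrArg _ ?_
  rw [chainGain_cons, chainGain, Fin.sum_univ_castSucc]
  simp [Fin.succ]

lemma chainGain_le_rockafellar {k : ℕ} {p : Fin (k + 1) → X × Y} (hp : ∀ i, p i ∈ Γ)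
    (z₀ : X × Y) (x : X) :
    (chainGain c (Fin.cons z₀ p : Fin (k + 2) → X × Y) x : EReal) ≤ rockafellar c Γ z₀ x := by
  rw [rockafellar_eq_iSup_chainGain]
  exact le_iSup_of_le k (le_iSup₂_of_le p hp le_rfl)

lemma rockafellar_ne_bot (hΓ : Γ.Nonempty) (z₀ : X × Y) (x : X) : rockafellar c Γ z₀ x ≠ ⊥ := by
  obtain ⟨z, hz⟩ := hΓ
  exact ne_bot_of_le_ne_bot (EReal.coe_ne_bot _)
    (chainGain_le_rockafellar (k := 0) (p := fun _ => z) (fun _ => hz) z₀ x)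

lemma rockafellar_le_add {x : X} {y : Y} (hxy : (x, y) ∈ Γ) (z₀ : X × Y) (x' : X) :
    rockafellar c Γ z₀ x ≤ rockafellar c Γ z₀ x' + ((c x' y - c x y : ℝ) : EReal) := by
  rw [rockafellar_eq_iSup_chainGain z₀ x]
  refine iSup_le fun k => iSup₂_le fun p hp => ?_
  have hp' : ∀ i, (Fin.snoc p (x, y) : Fin (k + 2) → X × Y) i ∈ Γ :=
    Fin.lastCases (by simpa using hxy) (by simpa using hp)
  calc (chainGain c (Fin.cons z₀ p : Fin (k + 2) → X × Y) x : EReal)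
      = (chainGain c (Fin.snoc (Fin.cons z₀ p : Fin (k + 2) → X × Y) (x, y) :
          Fin (k + 3) → X × Y) x' : EReal) + ((c x' y - c x y : ℝ) : EReal) := by
        rw [chainGain_snoc, ← EReal.coe_add]
        congr 1
        ring
    _ ≤ _ := by
        rw [← Fin.cons_snoc_eq_snoc_cons]
        gcongr
        exact chainGain_le_rockafellar hp' z₀ x'

lemma rockafellar_le_of_mem (hΓ : CCyclMonotone c Γ) {z₀ : X × Y} (hz₀ : z₀ ∈ Γ) {x : X} {y : Y}
    (hxy : (x, y) ∈ Γ) : rockafellar c Γ z₀ x ≤ ((c z₀.1 y - c x y : ℝ) : EReal) := by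
  rw [rockafellar_eq_iSup_chainGain]
  refine iSup_le fun k => iSup₂_le fun p hp => EReal.coe_le_coe_iff.2 ?_
  have hcons : ∀ i, (Fin.cons z₀ p : Fin (k + 2) → X × Y) i ∈ Γ :=
    Fin.cases (by simpa using hz₀) (by simpa using hp)
  have hq : ∀ i, (Fin.snoc (Fin.cons z₀ p : Fin (k + 2) → X × Y) (x, y) :
      Fin (k + 3) → X × Y) i ∈ Γ :=
    Fin.lastCases (by simpa using hxy) (by simpa using hcons)
  have hclosed := hΓ.chainGain_nonpos hq
  have hzero : (Fin.snoc (Fin.cons z₀ p : Fin (k + 2) → X × Y) (x, y) :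
      Fin (k + 3) → X × Y) 0 = z₀ := rfl
  rw [hzero, chainGain_snoc] at hclosed
  linarith

lemma mem_cSubdiff_of_forall_le {ψ : X → EReal} {x : X} {y : Y} (hbot : ψ x ≠ ⊥) (htop : ψ x ≠ ⊤)
    (hmin : ∀ x', ψ x + (c x y : EReal) ≤ ψ x' + (c x' y : EReal)) : (x, y) ∈ cSubdiff c ψ := by
  have hconj : cConj c ψ y = ψ x + (c x y : EReal) := (iInf_le _ x).antisymm (le_iInf hmin)
  change cConj c ψ y - ψ x = c x y
  lift ψ x to ℝ using ⟨htop, hbot⟩ with a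
  rw [hconj, ← EReal.coe_add, ← EReal.coe_sub, add_sub_cancel_left]

theorem CCyclMonotone.subset_cSubdiff_rockafellar (hΓ : CCyclMonotone c Γ) {z₀ : X × Y}
    (hz₀ : z₀ ∈ Γ) : Γ ⊆ cSubdiff c (rockafellar c Γ z₀) := by
  rintro ⟨x, y⟩ hxy
  refine mem_cSubdiff_of_forall_le (rockafellar_ne_bot ⟨z₀, hz₀⟩ z₀ x)
    (ne_top_of_le_ne_top (EReal.coe_ne_top _) (rockafellar_le_of_mem hΓ hz₀ hxy)) fun x' => ?_
  calc rockafellar c Γ z₀ x + (c x y : EReal)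
      ≤ rockafellar c Γ z₀ x' + ((c x' y - c x y : ℝ) : EReal) + (c x y : EReal) :=
        add_le_add_left (rockafellar_le_add hxy z₀ x') _
    _ = rockafellar c Γ z₀ x' + (c x' y : EReal) := by
        rw [add_assoc, ← EReal.coe_add, sub_add_cancel]

lemma lowerSemicontinuous_rockafellar [TopologicalSpace X] (hc : ∀ y, Continuous fun x => c x y)
    (Γ : Set (X × Y)) (z₀ : X × Y) : LowerSemicontinuous (rockafellar c Γ z₀) := by
  rw [funext (rockafellar_eq_iSup_chainGain z₀)]
  refine lowerSemicontinuous_iSup fun k => lowerSemicontinuous_iSup fun p =>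
    lowerSemicontinuous_iSup fun _ => Continuous.lowerSemicontinuous ?_
  exact continuous_coe_real_ereal.comp
    (continuous_const.add (continuous_const.sub (hc _)))

lemma upperSemicontinuous_cConj [TopologicalSpace Y] (hc : ∀ x, Continuous (c x))
    (ψ : X → EReal) : UpperSemicontinuous (cConj c ψ) := by
  refine upperSemicontinuous_iInf fun x => Continuous.upperSemicontinuous ?_
  induction ψ x with
  | bot => simpa only [EReal.bot_add] using continuous_const
  | coe a => exact continuous_coe_real_ereal.comp (continuous_const.add (hc x))
  | top => simpa only [EReal.top_add_coe] using continuous_const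

end Rockafellar

section Clamp

/-- The truncation of `t` to `[-r, r]`, used to make Kantorovich potentials integrable. For `r < 0`
the value is `-r`. -/
def clamp (r t : ℝ) : ℝ := max (-r) (min r t)

lemma measurable_clamp (r : ℝ) : Measurable (clamp r) :=
  measurable_const.max (measurable_const.min measurable_id)

lemma abs_clamp_le {r : ℝ} (hr : 0 ≤ r) (t : ℝ) : |clamp r t| ≤ r :=
  abs_le.2 ⟨le_max_left _ _, max_le (neg_le_self hr) (min_le_left _ _)⟩

lemma clamp_mono (r : ℝ) : Monotone (clamp r) := fun _ _ h =>
  max_le_max_left _ (min_le_min_left _ h)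

lemma clamp_le_clamp_add {a b t : ℝ} (r : ℝ) (ht : 0 ≤ t) (h : b ≤ a + t) :
    clamp r b ≤ clamp r a + t := by
  grind [clamp]

lemma tendsto_clamp_natCast (t : ℝ) : Tendsto (fun n : ℕ => clamp n t) atTop (𝓝 t) := by
  refine tendsto_const_nhds.congr' ?_
  filter_upwards [tendsto_natCast_atTop_atTop.eventually_ge_atTop |t|] with n hn
  rw [clamp, min_eq_right (le_of_abs_le hn), max_eq_right (neg_le_of_abs_le hn)]

end Clamp

section Optimality

lemma ofReal_integral_le_lintegral_ofReal {Ω : Type*} [MeasurableSpace Ω] {μ : Measure Ω}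
    {φ : Ω → ℝ} (hφ : Integrable φ μ) :
    ENNReal.ofReal (∫ z, φ z ∂μ) ≤ ∫⁻ z, ENNReal.ofReal (φ z) ∂μ := by
  rw [integral_eq_lintegral_pos_part_sub_lintegral_neg_part hφ]
  exact (ENNReal.ofReal_le_ofReal (sub_le_self _ ENNReal.toReal_nonneg)).trans
    ENNReal.ofReal_toReal_le

variable {X Y : Type*} [MeasurableSpace X] [MeasurableSpace Y] {c : X → Y → ℝ}
  {μ : Measure X} {ν : Measure Y} {π π' : Measure (X × Y)}

lemma IsCoupling.lintegral_ofReal_sub_le (h : IsCoupling μ ν π) (h' : IsCoupling μ ν π')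
    {f : X → ℝ} {g : Y → ℝ} (hf : Integrable f μ) (hg : Integrable g ν)
    (hfg : ∀ᵐ z ∂π, 0 ≤ g z.2 - f z.1) :
    ∫⁻ z, ENNReal.ofReal (g z.2 - f z.1) ∂π ≤ ∫⁻ z, ENNReal.ofReal (g z.2 - f z.1) ∂π' :=
  calc ∫⁻ z, ENNReal.ofReal (g z.2 - f z.1) ∂π
      = ENNReal.ofReal (∫ z, (g z.2 - f z.1) ∂π) :=
        (ofReal_integral_eq_lintegral_ofReal (h.integrable_sub hf hg) hfg).symm
    _ = ENNReal.ofReal (∫ z, (g z.2 - f z.1) ∂π') := by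
        rw [h.integral_sub hf hg, h'.integral_sub hf hg]
    _ ≤ ∫⁻ z, ENNReal.ofReal (g z.2 - f z.1) ∂π' :=
        ofReal_integral_le_lintegral_ofReal (h'.integrable_sub hf hg)

lemma integrable_clamp_comp {Ω : Type*} [MeasurableSpace Ω] {μ : Measure Ω} [IsFiniteMeasure μ]
    {f : Ω → ℝ} (hf : Measurable f) {r : ℝ} (hr : 0 ≤ r) :
    Integrable (fun x => clamp r (f x)) μ :=
  .of_bound ((measurable_clamp r).comp hf).aestronglyMeasurable r
    (ae_of_all _ fun _ => abs_clamp_le hr _)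

-- Truncated at height `n`, the potentials are integrable dual competitors, and Fatou's lemma passes
-- to the limit.
lemma transportCost_le_of_potentials (hc : ∀ x y, 0 ≤ c x y) (h : IsCoupling μ ν π)
    (h' : IsCoupling μ ν π') {f : X → ℝ} {g : Y → ℝ} (hf : Measurable f) (hg : Measurable g)
    (heq : ∀ᵐ z ∂π, g z.2 - f z.1 = c z.1 z.2) (hle : ∀ᵐ z ∂π', g z.2 - f z.1 ≤ c z.1 z.2) :
    transportCost c π ≤ transportCost c π' := by
  have := h.isProbabilityMeasure_left
  have := h.isProbabilityMeasure_right
  set φ : ℕ → X × Y → ℝ := fun n z => clamp n (g z.2) - clamp n (f z.1)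
  have hφ : ∀ n, Measurable (φ n) := fun n =>
    ((measurable_clamp n).comp (hg.comp measurable_snd)).sub
      ((measurable_clamp n).comp (hf.comp measurable_fst))
  have hφ_lim : ∀ᵐ z ∂π,
      liminf (fun n => ENNReal.ofReal (φ n z)) atTop = ENNReal.ofReal (c z.1 z.2) := by
    filter_upwards [heq] with z hz
    have hlim : Tendsto (φ · z) atTop (𝓝 (g z.2 - f z.1)) :=
      (tendsto_clamp_natCast _).sub (tendsto_clamp_natCast _)
    rw [← hz]
    exact (ENNReal.tendsto_ofReal hlim).liminf_eq
  have hφ_nonneg : ∀ n, ∀ᵐ z ∂π, 0 ≤ φ n z := fun n => by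
    filter_upwards [heq] with z hz
    exact sub_nonneg.2 (clamp_mono n (sub_nonneg.1 (hz ▸ hc z.1 z.2)))
  have hφ_le : ∀ n, ∀ᵐ z ∂π', φ n z ≤ c z.1 z.2 := fun n => by
    filter_upwards [hle] with z hz
    exact sub_le_iff_le_add'.2 (clamp_le_clamp_add n (hc z.1 z.2) (sub_le_iff_le_add'.1 hz))
  have hdual : ∀ n, ∫⁻ z, ENNReal.ofReal (φ n z) ∂π ≤ transportCost c π' := fun n =>
    (h.lintegral_ofReal_sub_le h' (integrable_clamp_comp hf n.cast_nonneg)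
      (integrable_clamp_comp hg n.cast_nonneg) (hφ_nonneg n)).trans
      (lintegral_mono_ae ((hφ_le n).mono fun _ => ENNReal.ofReal_le_ofReal))
  calc transportCost c π
      = ∫⁻ z, liminf (fun n => ENNReal.ofReal (φ n z)) atTop ∂π :=
        (lintegral_congr_ae hφ_lim).symm
    _ ≤ liminf (fun n => ∫⁻ z, ENNReal.ofReal (φ n z) ∂π) atTop :=
        lintegral_liminf_le fun n => (hφ n).ennreal_ofReal
    _ ≤ transportCost c π' :=
        liminf_le_of_frequently_le' (.of_forall hdual)

lemma exists_coe_eq_of_mem_cSubdiff {X Y : Type*} {c : X → Y → ℝ} {ψ : X → EReal} {z : X × Y}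
    (hz : z ∈ cSubdiff c ψ) :
    ∃ a b : ℝ, ψ z.1 = a ∧ cConj c ψ z.2 = b ∧ b - a = c z.1 z.2 := by
  change cConj c ψ z.2 - ψ z.1 = (c z.1 z.2 : EReal) at hz
  generalize ψ z.1 = u, cConj c ψ z.2 = v at hz ⊢
  induction u <;> induction v <;> simp_all [← EReal.coe_sub]

lemma transportCost_le_of_ae_mem_cSubdiff (hc : ∀ x y, 0 ≤ c x y) (h : IsCoupling μ ν π)
    (h' : IsCoupling μ ν π') {ψ : X → EReal} (hψ : Measurable ψ) (hψc : Measurable (cConj c ψ))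
    (hmem : ∀ᵐ z ∂π, z ∈ cSubdiff c ψ) : transportCost c π ≤ transportCost c π' := by
  have hf : Measurable fun x => (ψ x).toReal := hψ.ereal_toReal
  have hg : Measurable fun y => (cConj c ψ y).toReal := hψc.ereal_toReal
  have hfin_fst : ∀ᵐ z ∂π', ((ψ z.1).toReal : EReal) = ψ z.1 := by
    have hmeas := measurableSet_eq_fun hf.coe_real_ereal hψ
    refine (h'.ae_fst_iff hmeas).2 ((h.ae_fst_iff hmeas).1 ?_)
    filter_upwards [hmem] with z hz
    obtain ⟨a, b, ha, -, -⟩ := exists_coe_eq_of_mem_cSubdiff hz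
    rw [ha, EReal.toReal_coe]
  have hfin_snd : ∀ᵐ z ∂π', ((cConj c ψ z.2).toReal : EReal) = cConj c ψ z.2 := by
    have hmeas := measurableSet_eq_fun hg.coe_real_ereal hψc
    refine (h'.ae_snd_iff hmeas).2 ((h.ae_snd_iff hmeas).1 ?_)
    filter_upwards [hmem] with z hz
    obtain ⟨a, b, -, hb, -⟩ := exists_coe_eq_of_mem_cSubdiff hz
    rw [hb, EReal.toReal_coe]
  refine transportCost_le_of_potentials hc h h' hf hg ?_ ?_
  · filter_upwards [hmem] with z hz
    obtain ⟨a, b, ha, hb, hab⟩ := exists_coe_eq_of_mem_cSubdiff hz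
    rw [ha, hb, EReal.toReal_coe, EReal.toReal_coe, hab]
  · filter_upwards [hfin_fst, hfin_snd] with z hz₁ hz₂
    have hconj : cConj c ψ z.2 ≤ ψ z.1 + (c z.1 z.2 : EReal) := iInf_le _ z.1
    rw [← hz₁, ← hz₂] at hconj
    exact sub_le_iff_le_add'.2 (EReal.coe_le_coe_iff.1 hconj)

theorem transportCost_le_of_cCyclMonotone [TopologicalSpace X] [OpensMeasurableSpace X]
    [TopologicalSpace Y] [OpensMeasurableSpace Y] (hc₁ : ∀ y, Continuous fun x => c x y)
    (hc₂ : ∀ x, Continuous (c x)) (hc : ∀ x y, 0 ≤ c x y) {Γ : Set (X × Y)}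
    (hΓ : CCyclMonotone c Γ) (h : IsCoupling μ ν π) (hmem : ∀ᵐ z ∂π, z ∈ Γ)
    (h' : IsCoupling μ ν π') : transportCost c π ≤ transportCost c π' := by
  have := h.1
  obtain ⟨z₀, hz₀⟩ := hmem.exists
  exact transportCost_le_of_ae_mem_cSubdiff hc h h'
    (lowerSemicontinuous_rockafellar hc₁ Γ z₀).measurable
    (upperSemicontinuous_cConj hc₂ _).measurable
    (hmem.mono fun _ hz => hΓ.subset_cSubdiff_rockafellar hz₀ hz)

end Optimality

/-- weak cluster points of `π_ε` have `c`-cyclically monotone support, are optimal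
transports when the problem is finite, and the whole family converges when the `c`-cyclically
monotone coupling is unique. -/
theorem stmt3 (μ : Measure X) (ν : Measure Y)
    [IsProbabilityMeasure μ] [IsProbabilityMeasure ν]
    (c : X → Y → ℝ) (hc : Continuous fun p : X × Y => c p.1 p.2) (hc0 : ∀ x y, 0 ≤ c x y)
    (πε : ℝ → Measure (X × Y)) [∀ ε, IsProbabilityMeasure (πε ε)]
    (hπε : ∀ ε, 0 < ε → IsCyclInvariant c ε μ ν (πε ε))
    (π : Measure (X × Y)) [IsProbabilityMeasure π]
    (hclust : ∃ εn : ℕ → ℝ, (∀ n, 0 < εn n) ∧ Tendsto εn atTop (𝓝 0) ∧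
      ∀ f : BoundedContinuousFunction (X × Y) ℝ,
        Tendsto (fun n => ∫ z, f z ∂(πε (εn n))) atTop (𝓝 (∫ z, f z ∂π))) :
    CCyclMonotone c (mSupport π) ∧
    ((∃ π', IsCoupling μ ν π' ∧ transportCost c π' ≠ ⊤) →
      IsCoupling μ ν π ∧ ∀ π', IsCoupling μ ν π' → transportCost c π ≤ transportCost c π') ∧
    ((∃! πs : Measure (X × Y), IsCoupling μ ν πs ∧ CCyclMonotone c (mSupport πs)) →
      ∀ πs, IsCoupling μ ν πs → CCyclMonotone c (mSupport πs) → TendstoWeakly πε πs) := by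
  obtain ⟨εn, hεn0, hεn, hπ⟩ := hclust
  set P : ℝ → ProbabilityMeasure (X × Y) := fun ε => ⟨πε ε, inferInstance⟩
  set Q : ProbabilityMeasure (X × Y) := ⟨π, inferInstance⟩
  have hP : ∀ᶠ ε in 𝓝[>] (0 : ℝ), IsCyclInvariant c ε μ ν (P ε) :=
    eventually_nhdsWithin_of_forall hπε
  have hQ_lim : Tendsto (P ∘ εn) atTop (𝓝 Q) :=
    ProbabilityMeasure.tendsto_iff_forall_integral_tendsto.2 hπ
  have hQ : MapClusterPt Q (𝓝[>] 0) P :=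
    .of_comp (tendsto_nhdsWithin_iff.2 ⟨hεn, .of_forall hεn0⟩) hQ_lim.mapClusterPt
  have hmono : CCyclMonotone c (mSupport π) :=
    cCyclMonotone_mSupport_of_mapClusterPt tendsto_id hc hP hQ
  have hcoupling : IsCoupling μ ν π :=
    (isClosed_setOf_isCoupling μ ν).mem_of_mapClusterPt hQ (hP.mono fun _ h => h.1)
  refine ⟨hmono, fun _ => ⟨hcoupling, fun π' => ?_⟩, fun huniq πs hs hs_mono => ?_⟩
  · exact transportCost_le_of_cCyclMonotone (fun y => hc.comp (.prodMk_left y))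
      (fun x => hc.comp (.prodMk_right x)) hc0 hmono hcoupling (ae_mem_mSupport π)
  · have := hs.1
    exact ProbabilityMeasure.tendsto_iff_forall_integral_tendsto.1 <|
      tendsto_of_unique_cCyclMonotone (m := ⟨πs, inferInstance⟩) tendsto_id hc hP
        fun m hm hm_mono => Subtype.ext (huniq.unique ⟨hm, hm_mono⟩ ⟨hs, hs_mono⟩)

end Statement

end EOT
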